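/- Let b be a prime and α ≥ 2 an integer. For every real λ > 1/α, Σ_{k ∈ E} b^{−λ μ_α(⌊k/b⌋)} ≤ A₁, where A₁ = (b/(b−1)) [ Σ_{v=1}^{α−1} ∏_{i=1}^{v} (b−1)/(b^{λi}−1) + ((b^{λα}−1)/(b^{λα}−b)) ∏_{i=1}^{α} (b−1)/(b^{λi}−1) ]. -/

import Mathlib

namespace QMC

/-- the `i`-th `b`-adic digit of `k`. -/
def digit (b k i : ℕ) : ℕ := k / b ^ i % b

/-- `μ_α(k) = a₁ + ⋯ + a_{min(v,α)}`, the sum of the `α` largest positions (counted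
from `1`) of nonzero `b`-adic digits of `k`; `μ_α(0) = 0`. -/
def mualpha (b α k : ℕ) : ℕ :=
  (((((Finset.range (k + 1)).filter fun i => digit b k i ≠ 0).sort (· ≤ ·)).reverse.take
    α).map (· + 1)).sum

/-- the set `E` of positive integers whose `b`-adic digit sum is divisible by `b`. -/
def Eset (b : ℕ) : Set ℕ := {k | k ≠ 0 ∧ (b : ℕ) ∣ (Nat.digits b k).sum}

/-- the constant `A_{α,b,λ,1}`. -/
noncomputable def A1 (b α : ℕ) (lam : ℝ) : ℝ :=
  ((b : ℝ) / ((b : ℝ) - 1)) *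
    (∑ v ∈ Finset.Icc 1 (α - 1), ∏ i ∈ Finset.Icc 1 v,
        ((b : ℝ) - 1) / ((b : ℝ) ^ (lam * i) - 1) +
      (((b : ℝ) ^ (lam * α) - 1) / ((b : ℝ) ^ (lam * α) - b)) *
        ∏ i ∈ Finset.Icc 1 α, ((b : ℝ) - 1) / ((b : ℝ) ^ (lam * i) - 1))

/-!
Appending a digit `d` to `m`, i.e. passing to `k = b * m + d`, moves every position up by one, so
`μ_α(k) = μ_α(m) + c(k)`, where `c(k)` is the number of nonzero digits of `k` capped at `α`. Hence
the sums `S_v(n)` of `x ^ μ_α(m)` over `m < b ^ n` with `c(m) = v` satisfy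
`S_v(n + 1) = x ^ v * (e_v * S_v(n) + (b - 1) * S_{v - 1}(n))`, with `e_v = 1` for `v < α` and
`e_α = b`. For `x = b ^ (-λ)` the condition `λ > 1 / α` says that `b * x ^ α < 1`, so these
recurrences are contracting and `S_v(n)` converges as `n → ∞` to the fixed point, which gives
`∑ m, x ^ μ_α(m)` exactly.
Finally `k ↦ ⌊k / b⌋` is a bijection from `E` onto the positive integers, because the last digit of
an element of `E` is determined by the other ones. The sum over `E` is therefore `(b - 1) / b * A₁`.
-/

open Filter Finset Topology

section Recurrence

variable {𝕜 : Type*} [NormedField 𝕜] {u c : ℕ → 𝕜} {q l : 𝕜}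

lemma norm_sub_le_of_succ_eq_mul_add {ε : ℝ} {N : ℕ} (hε : 0 ≤ ε)
    (hu : ∀ n, u (n + 1) = q * u n + c n)
    (hc : ∀ n ≥ N, ‖c n - (1 - q) * l‖ ≤ (1 - ‖q‖) * ε) (k : ℕ) :
    ‖u (N + k) - l‖ ≤ ‖q‖ ^ k * ‖u N - l‖ + ε := by
  induction k with
  | zero => simpa using hε
  | succ k ih =>
    calc ‖u (N + (k + 1)) - l‖
        = ‖q * (u (N + k) - l) + (c (N + k) - (1 - q) * l)‖ := by
          rw [← add_assoc, hu]; congr 1; ring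
      _ ≤ ‖q‖ * ‖u (N + k) - l‖ + ‖c (N + k) - (1 - q) * l‖ :=
          (norm_add_le _ _).trans_eq (by rw [norm_mul])
      _ ≤ ‖q‖ * (‖q‖ ^ k * ‖u N - l‖ + ε) + (1 - ‖q‖) * ε := by
          gcongr; exact hc _ (Nat.le_add_right N k)
      _ = ‖q‖ ^ (k + 1) * ‖u N - l‖ + ε := by ring

lemma tendsto_of_succ_eq_mul_add (hq : ‖q‖ < 1) (hu : ∀ n, u (n + 1) = q * u n + c n)
    (hc : Tendsto c atTop (𝓝 ((1 - q) * l))) : Tendsto u atTop (𝓝 l) := by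
  rw [NormedAddCommGroup.tendsto_atTop'] at hc ⊢
  intro ε hε
  obtain ⟨N, hN⟩ := hc ((1 - ‖q‖) * (ε / 2)) (by nlinarith)
  have hbound := norm_sub_le_of_succ_eq_mul_add (N := N + 1) (half_pos hε).le hu
    fun n hn => (hN n hn).le
  have hdecay : Tendsto (fun k => ‖q‖ ^ k * ‖u (N + 1) - l‖) atTop (𝓝 0) := by
    simpa using (tendsto_pow_atTop_nhds_zero_of_lt_one (norm_nonneg q) hq).mul_const
      ‖u (N + 1) - l‖
  obtain ⟨K, hK⟩ := eventually_atTop.1 (hdecay.eventually_lt_const (half_pos hε))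
  refine ⟨N + 1 + K, fun n hn => ?_⟩
  obtain ⟨k, rfl⟩ := Nat.exists_eq_add_of_le hn.le
  rw [add_assoc]
  linarith [hbound (K + k), hK (K + k) (Nat.le_add_right K k)]

end Recurrence

lemma sum_range_mul_eq_sum_sum {M : Type*} [AddCommMonoid M] (f : ℕ → M) (N b : ℕ) :
    ∑ k ∈ range (N * b), f k = ∑ m ∈ range N, ∑ d ∈ range b, f (b * m + d) := by
  induction N with
  | zero => simp
  | succ N ih => rw [sum_range_succ, ← ih, add_mul, one_mul, sum_range_add, mul_comm b N]

/-- The sum of the `α` largest elements of `s`, each increased by one: `μ_α` as a function of the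
set of positions, counted from `0`, of the nonzero digits. -/
def topSum (α : ℕ) (s : Finset ℕ) : ℕ :=
  (((s.sort (· ≤ ·)).reverse.take α).map (· + 1)).sum

lemma sum_map_add_one (l : List ℕ) : (l.map (· + 1)).sum = l.sum + l.length := by
  simp [List.sum_map_add]

lemma sort_map_addRight_one (s : Finset ℕ) :
    (s.map (addRightEmbedding 1)).sort (· ≤ ·) = (s.sort (· ≤ ·)).map (· + 1) :=
  (Finset.map_sort (addRightEmbedding 1) s _ _ fun _ _ _ _ => by simp).symm

lemma topSum_map_addRight_one (α : ℕ) (s : Finset ℕ) :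
    topSum α (s.map (addRightEmbedding 1)) = topSum α s + min #s α := by
  rw [topSum, topSum, sort_map_addRight_one, ← List.map_reverse, ← List.map_take,
    sum_map_add_one (List.map _ _)]
  simp [min_comm]

lemma topSum_insert_zero (α : ℕ) {s : Finset ℕ} (hs : 0 ∉ s) :
    topSum α (insert 0 s) = topSum α s + if #s < α then 1 else 0 := by
  rw [topSum, topSum, sort_insert _ (fun i _ => Nat.zero_le i) hs, List.reverse_cons,
    List.take_append, List.map_append, List.sum_append, List.length_reverse, length_sort]
  split_ifs with h
  · rw [List.take_of_length_le (l := [0]) (Nat.sub_pos_of_lt h)]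
    simp
  · simp [Nat.sub_eq_zero_of_le (not_lt.1 h)]

/-- The positions, counted from `0`, of the nonzero `b`-adic digits of `k`. -/
def nonzeroPositions (b k : ℕ) : Finset ℕ :=
  {i ∈ range (k + 1) | digit b k i ≠ 0}

/-- The number `min(v, α)` of positions that contribute to `μ_α(k)`. -/
def topCount (b α k : ℕ) : ℕ := min #(nonzeroPositions b k) α

lemma mualpha_eq_topSum (b α k : ℕ) : mualpha b α k = topSum α (nonzeroPositions b k) := rfl

lemma digit_zero (b k : ℕ) : digit b k 0 = k % b := by simp [digit]

lemma digit_succ (b k i : ℕ) : digit b k (i + 1) = digit b (k / b) i := by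
  rw [digit, digit, pow_succ', Nat.div_div_eq_div_mul]

lemma topCount_le (b α k : ℕ) : topCount b α k ≤ α := min_le_right _ _

lemma mualpha_zero (b α : ℕ) : mualpha b α 0 = 0 := by
  simp [mualpha, digit]

section Digits

variable {b : ℕ} (hb : 2 ≤ b)
include hb

lemma mem_nonzeroPositions {k i : ℕ} : i ∈ nonzeroPositions b k ↔ digit b k i ≠ 0 := by
  rw [nonzeroPositions, mem_filter, mem_range, and_iff_right_iff_imp]
  contrapose!
  intro hi
  have hlt : k < b ^ i := Nat.lt_of_succ_lt (hi.trans_lt (Nat.lt_pow_self hb))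
  rw [digit, Nat.div_eq_of_lt hlt, Nat.zero_mod]

lemma nonzeroPositions_eq (k : ℕ) :
    nonzeroPositions b k =
      if k % b = 0 then (nonzeroPositions b (k / b)).map (addRightEmbedding 1)
      else insert 0 ((nonzeroPositions b (k / b)).map (addRightEmbedding 1)) := by
  ext (_ | i)
  · rw [mem_nonzeroPositions hb, digit_zero]
    split_ifs <;> simp_all
  · rw [mem_nonzeroPositions hb, digit_succ]
    split_ifs <;> simp [mem_nonzeroPositions hb]

lemma nonzeroPositions_eq_empty_iff {k : ℕ} : nonzeroPositions b k = ∅ ↔ k = 0 := by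
  refine ⟨fun hempty => ?_, fun h => by simp [h, nonzeroPositions, digit]⟩
  induction k using Nat.strong_induction_on with
  | _ k ih =>
    rw [nonzeroPositions_eq hb] at hempty
    split_ifs at hempty with hmod
    · by_contra hk
      have hdiv := ih (k / b) (Nat.div_lt_self (Nat.pos_of_ne_zero hk) hb) (map_eq_empty.1 hempty)
      exact hk (by rw [← Nat.div_add_mod k b, hdiv, hmod, mul_zero])
    · exact absurd hempty (insert_ne_empty _ _)

lemma topCount_eq (α k : ℕ) :
    topCount b α k =
      if k % b = 0 then topCount b α (k / b) else min (topCount b α (k / b) + 1) α := by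
  rw [topCount, nonzeroPositions_eq hb]
  split_ifs
  · rw [card_map, topCount]
  · rw [card_insert_of_notMem (by simp), card_map, topCount]
    omega

lemma topCount_mul_add (α m : ℕ) {d : ℕ} (hd : d < b) :
    topCount b α (b * m + d) =
      if d = 0 then topCount b α m else min (topCount b α m + 1) α := by
  rw [topCount_eq hb, Nat.mul_add_mod, Nat.mod_eq_of_lt hd, Nat.mul_add_div (by lia),
    Nat.div_eq_of_lt hd, add_zero]

lemma topCount_eq_zero_iff {α k : ℕ} (hα : α ≠ 0) : topCount b α k = 0 ↔ k = 0 := by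
  rw [topCount, ← nonzeroPositions_eq_empty_iff hb (k := k), ← card_eq_zero]
  lia

lemma mualpha_eq_mualpha_div_add_topCount (α k : ℕ) :
    mualpha b α k = mualpha b α (k / b) + topCount b α k := by
  rw [mualpha_eq_topSum, mualpha_eq_topSum, topCount_eq hb, nonzeroPositions_eq hb]
  split_ifs
  · rw [topSum_map_addRight_one, topCount]
  · rw [topSum_insert_zero _ (by simp), card_map, topSum_map_addRight_one, topCount]
    split_ifs <;> omega

lemma mualpha_mul_add (α m : ℕ) {d : ℕ} (hd : d < b) :
    mualpha b α (b * m + d) = mualpha b α m + topCount b α (b * m + d) := by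
  rw [mualpha_eq_mualpha_div_add_topCount hb, Nat.mul_add_div (by lia), Nat.div_eq_of_lt hd,
    add_zero]

end Digits

/-- The number of digits that can be appended to an integer whose `topCount` is `v` without changing
its `topCount`. -/
def stayCount (b α v : ℕ) : ℕ := if v = α then b else 1

lemma card_filter_topCount_mul_add {b : ℕ} (hb : 2 ≤ b) {α v : ℕ} (hv : v < α) (m : ℕ) :
    #{d ∈ range b | topCount b α (b * m + d) = v + 1} =
      (if topCount b α m = v + 1 then stayCount b α (v + 1) else 0) +
        if topCount b α m = v then b - 1 else 0 := by
  have hle := topCount_le b α m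
  have hcond : ∀ d ∈ range b, topCount b α (b * m + d) = v + 1 ↔
      if d = 0 then topCount b α m = v + 1 else min (topCount b α m + 1) α = v + 1 := by
    intro d hd
    rw [topCount_mul_add hb α m (mem_range.1 hd)]
    split_ifs <;> rfl
  rw [filter_congr hcond, card_filter]
  obtain ⟨c, rfl⟩ := Nat.exists_eq_add_of_le' (one_le_two.trans hb)
  rw [sum_range_succ']
  simp only [Nat.add_eq_zero_iff, one_ne_zero, and_false, if_false, if_true, sum_const, card_range,
    smul_eq_mul, stayCount, Nat.add_sub_cancel]
  split_ifs <;> lia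

/-- The sum of `x ^ μ_α(m)` over the `m < b ^ n` with `topCount b α m = v`. -/
def fiberSum {R : Type*} [Semiring R] (b α : ℕ) (x : R) (v n : ℕ) : R :=
  ∑ m ∈ range (b ^ n) with topCount b α m = v, x ^ mualpha b α m

lemma sum_pow_mualpha_eq_sum_fiberSum {R : Type*} [Semiring R] (b α : ℕ) (x : R) (n : ℕ) :
    ∑ m ∈ range (b ^ n), x ^ mualpha b α m = ∑ v ∈ range (α + 1), fiberSum b α x v n :=
  (sum_fiberwise_of_maps_to
    (fun m _ => mem_range.2 (Nat.lt_succ_of_le (topCount_le b α m))) _).symm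

lemma fiberSum_zero {R : Type*} [Semiring R] {b α : ℕ} (hb : 2 ≤ b) (hα : α ≠ 0) (x : R) (n : ℕ) :
    fiberSum b α x 0 n = 1 := by
  have hfilter : {m ∈ range (b ^ n) | topCount b α m = 0} = {0} := by
    ext m
    rw [mem_filter, topCount_eq_zero_iff hb hα, mem_range, mem_singleton, and_iff_right_iff_imp]
    rintro rfl
    positivity
  rw [fiberSum, hfilter, sum_singleton, mualpha_zero, pow_zero]

lemma fiberSum_succ_succ {R : Type*} [CommRing R] {b α v : ℕ} (hb : 2 ≤ b) (hv : v < α) (x : R)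
    (n : ℕ) :
    fiberSum b α x (v + 1) (n + 1) =
      x ^ (v + 1) * stayCount b α (v + 1) * fiberSum b α x (v + 1) n +
        x ^ (v + 1) * (b - 1) * fiberSum b α x v n := by
  have hdigits (m : ℕ) :
      (∑ d ∈ range b, if topCount b α (b * m + d) = v + 1 then x ^ mualpha b α (b * m + d) else 0) =
        #{d ∈ range b | topCount b α (b * m + d) = v + 1} * (x ^ (v + 1) * x ^ mualpha b α m) := by
    rw [← sum_filter, ← nsmul_eq_mul]
    refine sum_eq_card_nsmul fun d hd => ?_
    obtain ⟨hd, hcount⟩ := mem_filter.1 hd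
    rw [mualpha_mul_add hb α m (mem_range.1 hd), hcount, pow_add, mul_comm]
  simp only [fiberSum, sum_filter]
  rw [pow_succ, sum_range_mul_eq_sum_sum, mul_sum, mul_sum, ← sum_add_distrib]
  refine sum_congr rfl fun m _ => ?_
  rw [hdigits, card_filter_topCount_mul_add hb hv]
  have hcast : ((b - 1 : ℕ) : R) = b - 1 := Nat.cast_pred (by lia)
  push_cast [apply_ite (Nat.cast : ℕ → R), hcast]
  split_ifs <;> ring

/-- The limit `∏_{i ≤ v} (b - 1) / (y ^ i - 1)` of `fiberSum b α y⁻¹ v` for `v < α`; the products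
in `A1` are those with `y = b ^ λ`. -/
noncomputable def fiberLimit (b : ℕ) (y : ℝ) (v : ℕ) : ℝ :=
  ∏ i ∈ Icc 1 v, ((b : ℝ) - 1) / (y ^ i - 1)

lemma fiberLimit_zero (b : ℕ) (y : ℝ) : fiberLimit b y 0 = 1 := by simp [fiberLimit]

lemma fiberLimit_succ (b : ℕ) (y : ℝ) (v : ℕ) :
    fiberLimit b y (v + 1) = fiberLimit b y v * ((b - 1) / (y ^ (v + 1) - 1)) :=
  prod_Icc_succ_top (Nat.le_add_left 1 v) _

lemma tendsto_fiberSum_succ {b α v : ℕ} {y L : ℝ} (hb : 2 ≤ b) (hy : 0 < y) (hv : v < α)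
    (hstay : stayCount b α (v + 1) < y ^ (v + 1))
    (hL : Tendsto (fiberSum b α y⁻¹ v) atTop (𝓝 L)) :
    Tendsto (fiberSum b α y⁻¹ (v + 1)) atTop
      (𝓝 (L * ((b - 1) / (y ^ (v + 1) - stayCount b α (v + 1))))) := by
  have hpos : 0 < y ^ (v + 1) := by positivity
  have hratio : ‖y⁻¹ ^ (v + 1) * stayCount b α (v + 1)‖ < 1 := by
    rw [Real.norm_of_nonneg (by positivity), inv_pow, inv_mul_lt_one₀ hpos]
    exact hstay
  refine tendsto_of_succ_eq_mul_add hratio (fiberSum_succ_succ hb hv y⁻¹) ?_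
  convert hL.const_mul (y⁻¹ ^ (v + 1) * ((b : ℝ) - 1)) using 2
  have hne : y ^ (v + 1) - stayCount b α (v + 1) ≠ 0 := (sub_pos.2 hstay).ne'
  rw [inv_pow]
  field_simp

section Limits

variable {b α : ℕ} {y : ℝ} (hb : 2 ≤ b) (hy : 1 < y)
include hb hy

lemma tendsto_fiberSum_of_lt {v : ℕ} (hv : v < α) :
    Tendsto (fiberSum b α y⁻¹ v) atTop (𝓝 (fiberLimit b y v)) := by
  induction v with
  | zero =>
    rw [fiberLimit_zero, funext (fiberSum_zero hb hv.ne' y⁻¹)]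
    exact tendsto_const_nhds
  | succ v ih =>
    have hstay : stayCount b α (v + 1) = 1 := if_neg hv.ne
    have hpow : (stayCount b α (v + 1) : ℝ) < y ^ (v + 1) := by
      simpa only [hstay, Nat.cast_one] using one_lt_pow₀ hy v.succ_ne_zero
    simpa only [fiberLimit_succ, hstay, Nat.cast_one] using
      tendsto_fiberSum_succ hb (zero_lt_one.trans hy) (Nat.lt_of_succ_lt hv) hpow
        (ih (Nat.lt_of_succ_lt hv))

lemma tendsto_fiberSum_self (hα : α ≠ 0) (hyb : b < y ^ α) :
    Tendsto (fiberSum b α y⁻¹ α) atTop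
      (𝓝 ((y ^ α - 1) / (y ^ α - b) * fiberLimit b y α)) := by
  obtain ⟨v, rfl⟩ := Nat.exists_eq_succ_of_ne_zero hα
  have hstay : stayCount b (v + 1) (v + 1) = b := if_pos rfl
  have hlim := tendsto_fiberSum_succ hb (zero_lt_one.trans hy) v.lt_succ_self (by rwa [hstay])
    (tendsto_fiberSum_of_lt hb hy v.lt_succ_self)
  convert hlim using 2
  have hne : y ^ (v + 1) - 1 ≠ 0 := (sub_pos.2 (one_lt_pow₀ hy v.succ_ne_zero)).ne'
  rw [Nat.succ_eq_add_one, fiberLimit_succ, hstay]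
  field_simp

lemma hasSum_inv_pow_mualpha (hα : α ≠ 0) (hyb : b < y ^ α) :
    HasSum (fun m => y⁻¹ ^ mualpha b α m)
      (∑ v ∈ range α, fiberLimit b y v + (y ^ α - 1) / (y ^ α - b) * fiberLimit b y α) := by
  have hnonneg (m : ℕ) : 0 ≤ y⁻¹ ^ mualpha b α m := by positivity
  have hmono : Monotone fun N => ∑ m ∈ range N, y⁻¹ ^ mualpha b α m :=
    fun _ _ h => sum_le_sum_of_subset_of_nonneg (range_mono h) fun m _ _ => hnonneg m
  rw [hasSum_iff_tendsto_nat_of_nonneg hnonneg,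
    tendsto_iff_tendsto_subseq_of_monotone hmono (tendsto_pow_atTop_atTop_of_one_lt hb)]
  simp only [Function.comp_def, sum_pow_mualpha_eq_sum_fiberSum, sum_range_succ]
  exact (tendsto_finsetSum _ fun v hv => tendsto_fiberSum_of_lt hb hy (mem_range.1 hv)).add
    (tendsto_fiberSum_self hb hy hα hyb)

lemma hasSum_compl_zero_inv_pow_mualpha (hα : α ≠ 0) (hyb : b < y ^ α) :
    HasSum (fun m : ({0}ᶜ : Set ℕ) => y⁻¹ ^ mualpha b α m)
      (∑ v ∈ Icc 1 (α - 1), fiberLimit b y v +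
        (y ^ α - 1) / (y ^ α - b) * fiberLimit b y α) := by
  have hsplit : ∑ v ∈ range α, fiberLimit b y v =
      1 + ∑ v ∈ Icc 1 (α - 1), fiberLimit b y v := by
    rw [sum_range_eq_add_Ico _ (Nat.pos_of_ne_zero hα), fiberLimit_zero,
      ← Icc_sub_one_right_eq_Ico_of_not_isMin (by simpa using hα)]
  have hzero : HasSum (fun m : ({0} : Set ℕ) => y⁻¹ ^ mualpha b α m) 1 := by
    simpa [mualpha_zero] using hasSum_unique fun m : ({0} : Set ℕ) => y⁻¹ ^ mualpha b α m
  have htotal := hasSum_inv_pow_mualpha hb hy hα hyb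
  rw [hsplit, add_assoc] at htotal
  exact (HasSum.hasSum_compl_iff (f := fun m => y⁻¹ ^ mualpha b α m) hzero).2 htotal

end Limits

lemma exists_lt_dvd_add {b : ℕ} (hb : 0 < b) (s : ℕ) : ∃ d < b, b ∣ d + s := by
  refine ⟨(b - 1) * s % b, Nat.mod_lt _ hb, ?_⟩
  rw [Nat.dvd_iff_mod_eq_zero, Nat.mod_add_mod, ← Nat.succ_mul, Nat.succ_eq_add_one,
    Nat.sub_add_cancel hb, Nat.mul_mod_right]

section Eset

variable {b : ℕ} (hb : 2 ≤ b)
include hb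

lemma mem_Eset_iff {k : ℕ} :
    k ∈ Eset b ↔ k ≠ 0 ∧ b ∣ k % b + (Nat.digits b (k / b)).sum := by
  refine and_congr_right fun hk => ?_
  rw [Nat.digits_def' hb (Nat.pos_of_ne_zero hk), List.sum_cons]

lemma div_ne_zero_of_mem_Eset {k : ℕ} (hk : k ∈ Eset b) : k / b ≠ 0 := by
  intro hdiv
  obtain ⟨hk0, hdvd⟩ := (mem_Eset_iff hb).1 hk
  rw [hdiv, Nat.digits_zero, List.sum_nil, add_zero] at hdvd
  have hmod : k % b = 0 := Nat.eq_zero_of_dvd_of_lt hdvd (Nat.mod_lt k (by lia))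
  exact hk0 (by rw [← Nat.div_add_mod k b, hdiv, hmod, mul_zero])

lemma injOn_div_Eset : Set.InjOn (· / b) (Eset b) := by
  intro k hk l hl (hdiv : k / b = l / b)
  have hkmod := Nat.modEq_zero_iff_dvd.2 ((mem_Eset_iff hb).1 hk).2
  have hlmod := Nat.modEq_zero_iff_dvd.2 ((mem_Eset_iff hb).1 hl).2
  rw [← hdiv] at hlmod
  have hmod : k % b = l % b := by
    simpa [Nat.ModEq] using Nat.ModEq.add_right_cancel' _ (hkmod.trans hlmod.symm)
  rw [← Nat.div_add_mod k b, ← Nat.div_add_mod l b, hdiv, hmod]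

lemma exists_mem_Eset_div_eq {m : ℕ} (hm : m ≠ 0) : ∃ k ∈ Eset b, k / b = m := by
  obtain ⟨d, hd, hdvd⟩ := exists_lt_dvd_add (Nat.zero_lt_of_lt hb) (Nat.digits b m).sum
  have hdiv : (b * m + d) / b = m := by
    rw [Nat.mul_add_div (by lia), Nat.div_eq_of_lt hd, add_zero]
  have hmod : (b * m + d) % b = d := by rw [Nat.mul_add_mod, Nat.mod_eq_of_lt hd]
  have hpos : b * m ≠ 0 := Nat.mul_ne_zero (by lia) hm
  exact ⟨b * m + d, (mem_Eset_iff hb).2 ⟨by lia, by rwa [hdiv, hmod]⟩, hdiv⟩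

lemma bijOn_div_Eset : Set.BijOn (· / b) (Eset b) {0}ᶜ :=
  ⟨fun _ => div_ne_zero_of_mem_Eset hb, injOn_div_Eset hb, fun _ => exists_mem_Eset_div_eq hb⟩

end Eset

lemma A1_eq (b α : ℕ) (lam : ℝ) :
    A1 b α lam = b / (b - 1) *
      (∑ v ∈ Icc 1 (α - 1), fiberLimit b ((b : ℝ) ^ lam) v +
        (((b : ℝ) ^ lam) ^ α - 1) / (((b : ℝ) ^ lam) ^ α - b) *
          fiberLimit b ((b : ℝ) ^ lam) α) := by
  simp only [A1, fiberLimit, Real.rpow_mul_natCast b.cast_nonneg]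

theorem sum_Eset_le_general {b α : ℕ} (hb : 2 ≤ b) (hα : α ≠ 0) {lam : ℝ}
    (hlam : 1 / (α : ℝ) < lam) :
    HasSum (fun k : Eset b => (b : ℝ) ^ (-(lam * (mualpha b α (k.1 / b) : ℝ))))
      ((b - 1) / b * A1 b α lam) := by
  have hb1 : (1 : ℝ) < b := Nat.one_lt_cast.2 hb
  have hlam0 : 0 < lam := (by positivity : 0 ≤ 1 / (α : ℝ)).trans_lt hlam
  have hy : 1 < (b : ℝ) ^ lam := Real.one_lt_rpow hb1 hlam0
  have hyb : (b : ℝ) < ((b : ℝ) ^ lam) ^ α := by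
    rw [← Real.rpow_mul_natCast b.cast_nonneg]
    exact Real.self_lt_rpow_of_one_lt hb1 ((div_lt_iff₀ (by positivity)).1 hlam)
  have hterm (n : ℕ) : (b : ℝ) ^ (-(lam * n)) = ((b : ℝ) ^ lam)⁻¹ ^ n := by
    rw [Real.rpow_neg b.cast_nonneg, Real.rpow_mul_natCast b.cast_nonneg, inv_pow]
  have hconst : ((b : ℝ) - 1) / b * (b / (b - 1)) = 1 := by
    rw [div_mul_div_cancel₀' (sub_pos.2 hb1).ne', div_self (by positivity)]
  simp only [hterm]
  rw [A1_eq, ← mul_assoc, hconst, one_mul]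
  exact ((bijOn_div_Eset hb).equiv.hasSum_iff
    (f := fun m : ({0}ᶜ : Set ℕ) => ((b : ℝ) ^ lam)⁻¹ ^ mualpha b α m)).2
    (hasSum_compl_zero_inv_pow_mualpha hb hy hα hyb)

lemma A1_nonneg {b α : ℕ} (hb : 2 ≤ b) (hα : α ≠ 0) {lam : ℝ} (hlam : 1 / (α : ℝ) < lam) :
    0 ≤ A1 b α lam := by
  have hb1 : (1 : ℝ) < b := Nat.one_lt_cast.2 hb
  have hsum := (sum_Eset_le_general hb hα hlam).nonneg fun k => by positivity
  exact (mul_nonneg_iff_of_pos_left (div_pos (sub_pos.2 hb1) (by positivity))).1 hsum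

/-- For every `λ > 1/α`, `Σ_{k ∈ E} b^{-λ μ_α(⌊k/b⌋)} ≤ A_{α,b,λ,1}`. -/
theorem sum_Eset_le (b α : ℕ) (hb : b.Prime) (hα : 2 ≤ α) (lam : ℝ)
    (hlam : 1 / (α : ℝ) < lam) :
    Summable (fun k : Eset b => (b : ℝ) ^ (-(lam * (mualpha b α (k.1 / b) : ℝ)))) ∧
      ∑' k : Eset b, (b : ℝ) ^ (-(lam * (mualpha b α (k.1 / b) : ℝ))) ≤ A1 b α lam := by
  have hsum := sum_Eset_le_general hb.two_le (by lia) hlam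
  exact ⟨hsum.summable, hsum.tsum_eq.trans_le <|
    mul_le_of_le_one_left (A1_nonneg hb.two_le (by lia) hlam)
      (div_le_one_of_le₀ (by simp) (by simp))⟩

end QMC
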